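/- Fix an admissible control law and for 0 ≤ k ≤ N define x̂(k) = E[x(k) | σ(y(0),…,y(k−2))] (equal to 0 for k ≤ 1, since the conditioning record is empty) and x̃(k) = x(k) − x̂(k). Then for every k ≥ 1, almost surely x̃(k) = e¹(k) + (B F(k−1) + K¹(k−1)) ỹ(k−1), where e¹(k) = x(k) − x̂¹(k); moreover the random vectors x̂(k) and x̃(k) are independent. -/

import Mathlib

open MeasureTheory ProbabilityTheory Matrix Finset

noncomputable section

/-- Index type for vectors partitioned into three blocks of sizes `v 0, v 1, v 2`. -/
abbrev idx (v : Fin 3 → ℕ) : Type := Σ i : Fin 3, Fin (v i)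

/-- The block-index sets `S1 = {1,3}`, `S2 = {1,2}`, `S3 = {2,3}` (0-based:
`{0,2}, {0,1}, {1,2}`). -/
def Sset : Fin 3 → Finset (Fin 3) := ![{0, 2}, {0, 1}, {1, 2}]

/-- Index type for block rows/columns restricted to the blocks in `s`. -/
abbrev ridx (v : Fin 3 → ℕ) (s : Finset (Fin 3)) : Type := {a : idx v // a.1 ∈ s}

/-- A block-partitioned matrix is block diagonal when all off-diagonal blocks vanish. -/
def BlockDiag {v w : Fin 3 → ℕ} (M : Matrix (idx v) (idx w) ℝ) : Prop :=
  ∀ a b, a.1 ≠ b.1 → M a b = 0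

/-- A block-partitioned matrix has zero blocks in positions `(1,2), (2,3), (3,1)`
(1-based), i.e. in positions `(i, i+1 mod 3)` (0-based). -/
def CyclicSparse {v w : Fin 3 → ℕ} (M : Matrix (idx v) (idx w) ℝ) : Prop :=
  ∀ a b, b.1 = a.1 + 1 → M a b = 0

/-- `[M]_{s t}`: the submatrix of the block rows in `s` and block columns in `t`. -/
def subBB {v w : Fin 3 → ℕ} (M : Matrix (idx v) (idx w) ℝ) (s t : Finset (Fin 3)) :
    Matrix (ridx v s) (ridx w t) ℝ := fun a b => M a.1 b.1

/-- `[M]_{{1,2,3} t}`: all block rows, block columns restricted to `t`. -/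
def subCols {v w : Fin 3 → ℕ} (M : Matrix (idx v) (idx w) ℝ) (t : Finset (Fin 3)) :
    Matrix (idx v) (ridx w t) ℝ := fun a b => M a b.1

/-- `[M]ᵢ`: the `i`-th block row of `M`. -/
def blockRow {v w : Fin 3 → ℕ} (M : Matrix (idx v) (idx w) ℝ) (i : Fin 3) :
    Matrix (Fin (v i)) (idx w) ℝ := fun a b => M ⟨i, a⟩ b

variable {nv qv pv : Fin 3 → ℕ}

/-- The gain `K¹` of the three-player estimator, built from the error covariance `P`: its
`i`-th block row is supported on the block columns in `Sᵢ`, where it equals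
`[A]ᵢ [P]_{{1,2,3} Sᵢ} [C]ᵀ_{SᵢSᵢ} ([C]_{SᵢSᵢ}[P]_{SᵢSᵢ}[C]ᵀ_{SᵢSᵢ} + [V]_{SᵢSᵢ})⁻¹`. -/
def K1mat (A : Matrix (idx nv) (idx nv) ℝ) (C : Matrix (idx pv) (idx nv) ℝ)
    (V : Matrix (idx pv) (idx pv) ℝ) (P : Matrix (idx nv) (idx nv) ℝ) :
    Matrix (idx nv) (idx pv) ℝ := fun a b =>
  if h : b.1 ∈ Sset a.1 then
    (blockRow A a.1 * subCols P (Sset a.1) * (subBB C (Sset a.1) (Sset a.1))ᵀ *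
      (subBB C (Sset a.1) (Sset a.1) * subBB P (Sset a.1) (Sset a.1) *
        (subBB C (Sset a.1) (Sset a.1))ᵀ + subBB V (Sset a.1) (Sset a.1))⁻¹) a.2 ⟨b, h⟩
  else 0

/-- The standard Kalman gain `K = A P Cᵀ (C P Cᵀ + V)⁻¹`. -/
def Kgain (A : Matrix (idx nv) (idx nv) ℝ) (C : Matrix (idx pv) (idx nv) ℝ)
    (V : Matrix (idx pv) (idx pv) ℝ) (P : Matrix (idx nv) (idx nv) ℝ) :
    Matrix (idx nv) (idx pv) ℝ :=
  A * P * Cᵀ * (C * P * Cᵀ + V)⁻¹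

/-- The Kalman error covariance recursion `P(0) = P0`,
`P(k+1) = A P(k) Aᵀ + W − K(k) C P(k) Aᵀ`. -/
def Pmat (A : Matrix (idx nv) (idx nv) ℝ) (C : Matrix (idx pv) (idx nv) ℝ)
    (V : Matrix (idx pv) (idx pv) ℝ) (W P0 : Matrix (idx nv) (idx nv) ℝ) :
    ℕ → Matrix (idx nv) (idx nv) ℝ
  | 0 => P0
  | k + 1 =>
      A * Pmat A C V W P0 k * Aᵀ + W -
        Kgain A C V (Pmat A C V W P0 k) * (C * Pmat A C V W P0 k * Aᵀ)

variable {Ω : Type} [MeasurableSpace Ω]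

/-- The one-step Kalman predictor `x̂(k | k−1)`: `x̂(0 | −1) = 0` and
`x̂(k+1 | k) = A x̂(k | k−1) + B u(k) + K(k)(y(k) − C x̂(k | k−1))`. -/
def xpred (A : Matrix (idx nv) (idx nv) ℝ) (B : Matrix (idx nv) (idx qv) ℝ)
    (C : Matrix (idx pv) (idx nv) ℝ) (V : Matrix (idx pv) (idx pv) ℝ)
    (W P0 : Matrix (idx nv) (idx nv) ℝ)
    (u : ℕ → Ω → idx qv → ℝ) (y : ℕ → Ω → idx pv → ℝ) :
    ℕ → Ω → idx nv → ℝ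
  | 0 => fun _ => 0
  | k + 1 => fun ω =>
      A *ᵥ xpred A B C V W P0 u y k ω + B *ᵥ u k ω +
        Kgain A C V (Pmat A C V W P0 k) *ᵥ (y k ω - C *ᵥ xpred A B C V W P0 u y k ω)

/-- The innovation `ỹ(k) = y(k) − C x̂(k | k−1)`. -/
def innov (A : Matrix (idx nv) (idx nv) ℝ) (B : Matrix (idx nv) (idx qv) ℝ)
    (C : Matrix (idx pv) (idx nv) ℝ) (V : Matrix (idx pv) (idx pv) ℝ)
    (W P0 : Matrix (idx nv) (idx nv) ℝ)
    (u : ℕ → Ω → idx qv → ℝ) (y : ℕ → Ω → idx pv → ℝ) (k : ℕ) : Ω → idx pv → ℝ :=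
  fun ω => y k ω - C *ᵥ xpred A B C V W P0 u y k ω

/-- The improved local estimate
`x̂¹(k) = A x̂(k−1 | k−2) + B u(k−1) + K¹(k−1)(y(k−1) − C x̂(k−1 | k−2))` (for `k ≥ 1`). -/
def xh1 (A : Matrix (idx nv) (idx nv) ℝ) (B : Matrix (idx nv) (idx qv) ℝ)
    (C : Matrix (idx pv) (idx nv) ℝ) (V : Matrix (idx pv) (idx pv) ℝ)
    (W P0 : Matrix (idx nv) (idx nv) ℝ)
    (u : ℕ → Ω → idx qv → ℝ) (y : ℕ → Ω → idx pv → ℝ) (k : ℕ) : Ω → idx nv → ℝ :=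
  fun ω =>
    A *ᵥ xpred A B C V W P0 u y (k - 1) ω + B *ᵥ u (k - 1) ω +
      K1mat A C V (Pmat A C V W P0 (k - 1)) *ᵥ innov A B C V W P0 u y (k - 1) ω

/-- A random vector is (jointly) Gaussian when every linear functional of it has a
(possibly degenerate) one-dimensional Gaussian distribution. -/
def IsGaussianVec {d : Type} [Fintype d] (μ : Measure Ω) (X : Ω → d → ℝ) : Prop :=
  ∀ l : d → ℝ, ∃ m s, μ.map (fun ω => ∑ i, l i * X ω i) = gaussianReal m s

/-- The standing noise assumptions: `x(0), w(0),…,w(N−1), v(0),…,v(N−1)` are measurable,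
mutually independent and Gaussian with mean zero and covariances `P0`, `W`, `V`. -/
def NoiseOK (μ : Measure Ω) (N : ℕ) (P0 W : Matrix (idx nv) (idx nv) ℝ)
    (V : Matrix (idx pv) (idx pv) ℝ) (x0 : Ω → idx nv → ℝ)
    (w : ℕ → Ω → idx nv → ℝ) (v : ℕ → Ω → idx pv → ℝ) : Prop :=
  Measurable x0 ∧ (∀ k, Measurable (w k)) ∧ (∀ k, Measurable (v k)) ∧
  iIndep (fun i : Unit ⊕ Fin N ⊕ Fin N =>
    Sum.elim (fun _ => MeasurableSpace.comap x0 inferInstance)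
      (Sum.elim (fun k : Fin N => MeasurableSpace.comap (w ↑k) inferInstance)
        (fun k : Fin N => MeasurableSpace.comap (v ↑k) inferInstance)) i) μ ∧
  IsGaussianVec μ x0 ∧ (∀ k < N, IsGaussianVec μ (w k)) ∧ (∀ k < N, IsGaussianVec μ (v k)) ∧
  (∀ i, ∫ ω, x0 ω i ∂μ = 0) ∧ (∀ i j, ∫ ω, x0 ω i * x0 ω j ∂μ = P0 i j) ∧
  (∀ k < N, ∀ i, ∫ ω, w k ω i ∂μ = 0) ∧
  (∀ k < N, ∀ i j, ∫ ω, w k ω i * w k ω j ∂μ = W i j) ∧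
  (∀ k < N, ∀ i, ∫ ω, v k ω i ∂μ = 0) ∧
  (∀ k < N, ∀ i j, ∫ ω, v k ω i * v k ω j ∂μ = V i j)

/-- The closed-loop equations induced by the admissible control law `(F, G, Φ)`:
`x(k+1) = A x(k) + B u(k) + w(k)`, `y(k) = C x(k) + v(k)`, and
`u(k) = F(k) y(k) + G(k) y(k−1) + ∑_{j ≤ k−2} Φ(k,j) y(j)` (absent terms for `k = 0`). -/
def ClosedLoop (A : Matrix (idx nv) (idx nv) ℝ) (B : Matrix (idx nv) (idx qv) ℝ)
    (C : Matrix (idx pv) (idx nv) ℝ) (x0 : Ω → idx nv → ℝ)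
    (w : ℕ → Ω → idx nv → ℝ) (v : ℕ → Ω → idx pv → ℝ)
    (F G : ℕ → Matrix (idx qv) (idx pv) ℝ) (Φ : ℕ → ℕ → Matrix (idx qv) (idx pv) ℝ)
    (x : ℕ → Ω → idx nv → ℝ) (u : ℕ → Ω → idx qv → ℝ) (y : ℕ → Ω → idx pv → ℝ) : Prop :=
  (∀ ω, x 0 ω = x0 ω) ∧
  (∀ k, ∀ ω, x (k + 1) ω = A *ᵥ x k ω + B *ᵥ u k ω + w k ω) ∧
  (∀ k, ∀ ω, y k ω = C *ᵥ x k ω + v k ω) ∧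
  (∀ k, ∀ ω, u k ω = F k *ᵥ y k ω +
    (if 1 ≤ k then G k *ᵥ y (k - 1) ω else 0) +
    ∑ j ∈ Finset.range (k - 1), Φ k j *ᵥ y j ω)

/-- Sparsity constraints of the three-player information structure: `F(k)` block diagonal
and `G(k)` with zero blocks at `(1,2), (2,3), (3,1)`. -/
def Admissible (F G : ℕ → Matrix (idx qv) (idx pv) ℝ) : Prop :=
  (∀ k, BlockDiag (F k)) ∧ (∀ k, CyclicSparse (G k))

/-- `σ(y(0), …, y(k−2))`: the common two-step-delayed information. -/
def pastSigma (y : ℕ → Ω → idx pv → ℝ) (k : ℕ) : MeasurableSpace Ω :=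
  ⨆ j ∈ Finset.range (k - 1), MeasurableSpace.comap (y j) inferInstance

/-!
The prediction error `e(k) = x(k) - x̂(k | k-1)` does not depend on the control, and by induction on
`k` it has covariance `P(k)` and is uncorrelated with `y(0), …, y(k-1)`: the Kalman gain is exactly
the one that makes `e(k+1)` uncorrelated with the innovation `ỹ(k) = C e(k) + v(k)`.
Substituting `x(k) = x̂(k | k-1) + e(k)` and `y(k) = C x̂(k | k-1) + ỹ(k)` splits `x(k+1)` into a
linear function of `y(0), …, y(k-1)` and the centred vector `A e(k) + w(k) + B F(k) ỹ(k)`, which is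
uncorrelated with those outputs and hence, everything being jointly Gaussian, independent of them.
So the first summand is `x̂(k+1)` and the second is `x̃(k+1)`. In the formula for `x̃(k+1)` the gain
`K¹(k)` multiplies the same innovation once with each sign, and cancels.
-/

section Components

variable {α ι d d' : Type*}

/-- The random vectors all of whose components lie in the space `S` of random variables. -/
def componentwise (d : Type*) (S : Submodule ℝ (α → ℝ)) : Submodule ℝ (α → d → ℝ) where
  carrier := {X | ∀ i, (fun ω => X ω i) ∈ S}
  add_mem' hX hY i := S.add_mem (hX i) (hY i)
  zero_mem' _ := S.zero_mem
  smul_mem' c _ hX i := S.smul_mem c (hX i)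

lemma componentwise_mono {S T : Submodule ℝ (α → ℝ)} (h : S ≤ T) :
    componentwise d S ≤ componentwise d T :=
  fun _ hX i => h (hX i)

lemma mulVec_mem_componentwise [Fintype d] {S : Submodule ℝ (α → ℝ)} {X : α → d → ℝ}
    (M : Matrix d' d ℝ) (hX : X ∈ componentwise d S) :
    (fun ω => M *ᵥ X ω) ∈ componentwise d' S := by
  intro i
  have hrow : (fun ω => (M *ᵥ X ω) i) = ∑ j, M i j • fun ω => X ω j := by
    ext ω
    simp [Matrix.mulVec, dotProduct]
  rw [hrow]
  exact S.sum_mem fun j _ => S.smul_mem _ (hX j)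

variable {D : ι → Type*} {X : ∀ i, α → D i → ℝ} {s t : Set ι}

/-- The linear span of the components of the random vectors `X i`, `i ∈ s`. -/
def componentSpan (X : ∀ i, α → D i → ℝ) (s : Set ι) : Submodule ℝ (α → ℝ) :=
  Submodule.span ℝ {f | ∃ i ∈ s, ∃ a, f = fun ω => X i ω a}

lemma mem_componentwise_componentSpan {i : ι} (hi : i ∈ s) :
    X i ∈ componentwise (D i) (componentSpan X s) :=
  fun a => Submodule.subset_span ⟨i, hi, a, rfl⟩

lemma componentSpan_le {S : Submodule ℝ (α → ℝ)} (h : ∀ i ∈ s, X i ∈ componentwise (D i) S) :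
    componentSpan X s ≤ S :=
  Submodule.span_le.2 <| by
    rintro _ ⟨i, hi, a, rfl⟩
    exact h i hi a

lemma componentSpan_mono (h : s ⊆ t) : componentSpan X s ≤ componentSpan X t :=
  componentSpan_le fun _ hi => mem_componentwise_componentSpan (h hi)

lemma exists_continuousLinearMap_of_mem_componentSpan {f : α → ℝ} (hf : f ∈ componentSpan X s) :
    ∃ L : (∀ i, D i → ℝ) →L[ℝ] ℝ, ∀ ω, f ω = L fun i => X i ω := by
  induction hf using Submodule.span_induction with
  | mem f hf =>
    obtain ⟨i, -, a, rfl⟩ := hf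
    exact ⟨.comp (.proj a) (.proj (φ := fun i => D i → ℝ) i), fun _ => rfl⟩
  | zero => exact ⟨0, fun _ => rfl⟩
  | add f g _ _ ihf ihg =>
    obtain ⟨L, hL⟩ := ihf
    obtain ⟨M, hM⟩ := ihg
    exact ⟨L + M, fun ω => by simp [hL, hM]⟩
  | smul c f _ ih =>
    obtain ⟨L, hL⟩ := ih
    exact ⟨c • L, fun ω => by simp [hL]⟩

lemma exists_continuousLinearMap_of_mem_componentwise {Y : α → d → ℝ}
    (hY : Y ∈ componentwise d (componentSpan X s)) :
    ∃ L : (∀ i, D i → ℝ) →L[ℝ] d → ℝ, ∀ ω, Y ω = L fun i => X i ω := by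
  choose L hL using fun i => exists_continuousLinearMap_of_mem_componentSpan (hY i)
  exact ⟨.pi L, fun ω => funext fun i => hL i ω⟩

lemma measurable_of_mem_componentSpan [MeasurableSpace α] (hX : ∀ i ∈ s, Measurable (X i))
    {f : α → ℝ} (hf : f ∈ componentSpan X s) : Measurable f := by
  induction hf using Submodule.span_induction with
  | mem f hf =>
    obtain ⟨i, hi, a, rfl⟩ := hf
    exact (measurable_pi_apply a).comp (hX i hi)
  | zero => exact measurable_const
  | add f g _ _ ihf ihg => exact ihf.add ihg
  | smul c f _ ih => exact ih.const_smul c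

lemma measurable_of_mem_componentwise [MeasurableSpace α] (hX : ∀ i ∈ s, Measurable (X i))
    {Y : α → d → ℝ} (hY : Y ∈ componentwise d (componentSpan X s)) : Measurable Y :=
  measurable_pi_lambda _ fun a => measurable_of_mem_componentSpan hX (hY a)

end Components

section CrossCovariance

variable {α d d₁ d₂ : Type*} {mα : MeasurableSpace α} {μ : Measure α}

/-- The cross-covariance matrix `E[(X - E X)(Y - E Y)ᵀ]` of two random vectors. -/
def crossCov (μ : Measure α) (X : α → d₁ → ℝ) (Y : α → d₂ → ℝ) : Matrix d₁ d₂ ℝ :=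
  .of fun i j => cov[fun ω => X ω i, fun ω => Y ω j; μ]

lemma transpose_crossCov (X : α → d₁ → ℝ) (Y : α → d₂ → ℝ) :
    (crossCov μ X Y)ᵀ = crossCov μ Y X := by
  ext i j
  exact covariance_comm _ _

lemma crossCov_eq_zero_comm {X : α → d₁ → ℝ} {Y : α → d₂ → ℝ} :
    crossCov μ X Y = 0 ↔ crossCov μ Y X = 0 := by
  rw [← transpose_crossCov, transpose_eq_zero]

lemma crossCov_eq_of_integral_eq_zero [IsProbabilityMeasure μ] [Fintype d] {X : α → d → ℝ}
    {M : Matrix d d ℝ} (hX : MemLp X 2 μ) (hmean : ∀ i, ∫ ω, X ω i ∂μ = 0)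
    (hM : ∀ i j, ∫ ω, X ω i * X ω j ∂μ = M i j) : crossCov μ X X = M := by
  ext i j
  rw [crossCov, Matrix.of_apply, covariance_eq_sub (hX.eval i) (hX.eval j), hmean, zero_mul,
    sub_zero]
  exact hM i j

variable [Fintype d₁] [Fintype d₂]

lemma memLp_mulVec {p : ENNReal} {X : α → d₁ → ℝ} (M : Matrix d₂ d₁ ℝ) (hX : MemLp X p μ) :
    MemLp (fun ω => M *ᵥ X ω) p μ :=
  (LinearMap.toContinuousLinearMap M.mulVecLin).comp_memLp' hX

lemma posSemidef_crossCov_self [IsFiniteMeasure μ] {X : α → d₁ → ℝ} (hX : MemLp X 2 μ) :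
    (crossCov μ X X).PosSemidef := by
  refine .of_dotProduct_mulVec_nonneg (transpose_crossCov X X) fun a => ?_
  have hvar : star a ⬝ᵥ crossCov μ X X *ᵥ a = Var[fun ω => ∑ i, a i * X ω i; μ] := by
    rw [variance_fun_sum fun i => (hX.eval i).const_mul _]
    simp only [covariance_const_mul_left, covariance_const_mul_right, crossCov, Matrix.mulVec,
      dotProduct, Matrix.of_apply, Finset.mul_sum, star_trivial]
    exact Finset.sum_congr rfl fun i _ => Finset.sum_congr rfl fun j _ => by ring
  exact hvar ▸ variance_nonneg _ _

variable [IsFiniteMeasure μ] {X X' : α → d₁ → ℝ} {Y Y' : α → d₂ → ℝ}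

lemma crossCov_add_left (hX : MemLp X 2 μ) (hX' : MemLp X' 2 μ) (hY : MemLp Y 2 μ) :
    crossCov μ (fun ω => X ω + X' ω) Y = crossCov μ X Y + crossCov μ X' Y := by
  ext i j
  exact covariance_add_left (hX.eval i) (hX'.eval i) (hY.eval j)

lemma crossCov_sub_left (hX : MemLp X 2 μ) (hX' : MemLp X' 2 μ) (hY : MemLp Y 2 μ) :
    crossCov μ (fun ω => X ω - X' ω) Y = crossCov μ X Y - crossCov μ X' Y := by
  ext i j
  exact covariance_sub_left (hX.eval i) (hX'.eval i) (hY.eval j)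

lemma crossCov_mulVec_left (M : Matrix d d₁ ℝ) (hX : MemLp X 2 μ) (hY : MemLp Y 2 μ) :
    crossCov μ (fun ω => M *ᵥ X ω) Y = M * crossCov μ X Y := by
  ext i j
  simp only [crossCov, Matrix.of_apply, Matrix.mulVec, dotProduct, Matrix.mul_apply]
  rw [covariance_fun_sum_left (fun k => (hX.eval k).const_mul _) (hY.eval j)]
  simp only [covariance_const_mul_left]

lemma crossCov_add_right (hX : MemLp X 2 μ) (hY : MemLp Y 2 μ) (hY' : MemLp Y' 2 μ) :
    crossCov μ X (fun ω => Y ω + Y' ω) = crossCov μ X Y + crossCov μ X Y' := by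
  simp only [← transpose_crossCov (X := _) (Y := X), crossCov_add_left hY hY' hX, transpose_add]

lemma crossCov_sub_right (hX : MemLp X 2 μ) (hY : MemLp Y 2 μ) (hY' : MemLp Y' 2 μ) :
    crossCov μ X (fun ω => Y ω - Y' ω) = crossCov μ X Y - crossCov μ X Y' := by
  simp only [← transpose_crossCov (X := _) (Y := X), crossCov_sub_left hY hY' hX, transpose_sub]

lemma crossCov_mulVec_right (M : Matrix d d₂ ℝ) (hX : MemLp X 2 μ) (hY : MemLp Y 2 μ) :
    crossCov μ X (fun ω => M *ᵥ Y ω) = crossCov μ X Y * Mᵀ := by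
  simp only [← transpose_crossCov (X := _) (Y := X), crossCov_mulVec_left M hY hX, transpose_mul]

end CrossCovariance

section Uncorrelated

variable {α ι d d' : Type*} {mα : MeasurableSpace α} {μ : Measure α}

/-- The square-integrable random variables that are uncorrelated with every square-integrable
element of `S`. -/
def uncorrelated (μ : Measure α) [IsFiniteMeasure μ] (S : Set (α → ℝ)) :
    Submodule ℝ (α → ℝ) where
  carrier := {f | MemLp f 2 μ ∧ ∀ g ∈ S, MemLp g 2 μ → cov[f, g; μ] = 0}
  add_mem' := by
    rintro f f' ⟨hf, hfS⟩ ⟨hf', hfS'⟩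
    refine ⟨hf.add hf', fun g hg hgL => ?_⟩
    rw [covariance_add_left hf hf' hgL, hfS g hg hgL, hfS' g hg hgL, add_zero]
  zero_mem' := ⟨MemLp.zero, fun g _ _ => covariance_zero_left⟩
  smul_mem' := by
    rintro c f ⟨hf, hfS⟩
    refine ⟨hf.const_smul c, fun g hg hgL => ?_⟩
    rw [covariance_smul_left, hfS g hg hgL, mul_zero]

variable [IsFiniteMeasure μ]

lemma uncorrelated_anti {S T : Set (α → ℝ)} (h : S ⊆ T) : uncorrelated μ T ≤ uncorrelated μ S :=
  fun _ hf => ⟨hf.1, fun g hg => hf.2 g (h hg)⟩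

lemma crossCov_eq_zero [Fintype d'] {S : Submodule ℝ (α → ℝ)} {X : α → d → ℝ} {Y : α → d' → ℝ}
    (hX : X ∈ componentwise d (uncorrelated μ S)) (hY : Y ∈ componentwise d' S)
    (hYL : MemLp Y 2 μ) : crossCov μ X Y = 0 := by
  ext i j
  exact (hX i).2 _ (hY j) (hYL.eval j)

lemma mem_componentwise_uncorrelated [Fintype d] {D : ι → Type*} [∀ i, Fintype (D i)]
    {Y : ∀ i, α → D i → ℝ} {s : Set ι} {X : α → d → ℝ} (hX : MemLp X 2 μ)
    (hY : ∀ i ∈ s, MemLp (Y i) 2 μ) (h : ∀ i ∈ s, crossCov μ X (Y i) = 0) :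
    X ∈ componentwise d (uncorrelated μ (componentSpan Y s)) := by
  intro a
  have hspan : componentSpan Y s ≤ uncorrelated μ {fun ω => X ω a} := by
    refine componentSpan_le fun i hi b => ⟨(hY i hi).eval b, ?_⟩
    rintro _ rfl -
    rw [covariance_comm]
    exact congrFun₂ (h i hi) a b
  refine ⟨hX.eval a, fun g hg _ => ?_⟩
  rw [covariance_comm]
  exact (hspan hg).2 _ rfl (hX.eval a)

end Uncorrelated

section LinearEstimation

variable {α d d₁ d₂ : Type*} {mα : MeasurableSpace α} {μ : Measure α} [IsFiniteMeasure μ]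
  [Fintype d] [Fintype d₁] [Fintype d₂]

lemma crossCov_mulVec_add_mulVec_add {e : α → d → ℝ} {r : α → d₁ → ℝ} {s : α → d₂ → ℝ}
    (M : Matrix d₁ d ℝ) (M' : Matrix d₂ d ℝ)
    (he : MemLp e 2 μ) (hr : MemLp r 2 μ) (hs : MemLp s 2 μ)
    (her : crossCov μ e r = 0) (hes : crossCov μ e s = 0) :
    crossCov μ (fun ω => M *ᵥ e ω + r ω) (fun ω => M' *ᵥ e ω + s ω) =
      M * crossCov μ e e * M'ᵀ + crossCov μ r s := by
  have hM'e := memLp_mulVec M' he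
  have hM's : MemLp (fun ω => M' *ᵥ e ω + s ω) 2 μ := hM'e.add hs
  rw [crossCov_add_left (memLp_mulVec M he) hr hM's, crossCov_mulVec_left M he hM's,
    crossCov_add_right he hM'e hs, crossCov_add_right hr hM'e hs, crossCov_mulVec_right M' he he,
    crossCov_mulVec_right M' hr he, hes, crossCov_eq_zero_comm.1 her]
  simp only [add_zero, Matrix.zero_mul, zero_add, Matrix.mul_assoc]

variable [DecidableEq d₂] {z : α → d₁ → ℝ} {s : α → d₂ → ℝ}

lemma crossCov_sub_gain_mulVec_eq_zero (hz : MemLp z 2 μ) (hs : MemLp s 2 μ)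
    (hpos : (crossCov μ s s).PosDef) :
    crossCov μ (fun ω => z ω - (crossCov μ z s * (crossCov μ s s)⁻¹) *ᵥ s ω) s = 0 := by
  rw [crossCov_sub_left hz (memLp_mulVec _ hs) hs, crossCov_mulVec_left _ hs hs, Matrix.mul_assoc,
    Matrix.nonsing_inv_mul _ ((Matrix.isUnit_iff_isUnit_det _).1 hpos.isUnit), Matrix.mul_one,
    sub_self]

lemma crossCov_sub_gain_mulVec_self (hz : MemLp z 2 μ) (hs : MemLp s 2 μ)
    (hpos : (crossCov μ s s).PosDef) :
    crossCov μ (fun ω => z ω - (crossCov μ z s * (crossCov μ s s)⁻¹) *ᵥ s ω)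
        (fun ω => z ω - (crossCov μ z s * (crossCov μ s s)⁻¹) *ᵥ s ω) =
      crossCov μ z z - crossCov μ z s * (crossCov μ s s)⁻¹ * crossCov μ s z := by
  have hKs := memLp_mulVec (crossCov μ z s * (crossCov μ s s)⁻¹) hs
  have herr : MemLp (fun ω => z ω - (crossCov μ z s * (crossCov μ s s)⁻¹) *ᵥ s ω) 2 μ :=
    hz.sub hKs
  rw [crossCov_sub_right herr hz hKs, crossCov_mulVec_right _ herr hs,
    crossCov_sub_gain_mulVec_eq_zero hz hs hpos, Matrix.zero_mul, sub_zero,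
    crossCov_sub_left hz hKs hz, crossCov_mulVec_left _ hs hz]

end LinearEstimation

section Gaussian

variable {α ι κ d d' : Type*} {mα : MeasurableSpace α} {μ : Measure α} {D : ι → Type*}
  {ξ : ∀ i, α → D i → ℝ}

lemma integral_eq_zero_of_mem_componentwise [Fintype ι] [Fintype d] [∀ i, Fintype (D i)]
    (hξ : Integrable (fun ω i => ξ i ω) μ) (h0 : ∀ i a, ∫ ω, ξ i ω a ∂μ = 0)
    {X : α → d → ℝ} (hX : X ∈ componentwise d (componentSpan ξ Set.univ)) :
    ∫ ω, X ω ∂μ = 0 := by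
  obtain ⟨L, hL⟩ := exists_continuousLinearMap_of_mem_componentwise hX
  have hmean : ∫ ω, (fun i => ξ i ω) ∂μ = 0 := by
    ext i a
    rw [eval_integral fun i => hξ.eval i, eval_integral fun a => (hξ.eval i).eval a]
    exact h0 i a
  simp only [hL, L.integral_comp_comm hξ, hmean, map_zero]

variable [Finite ι] [Finite d] [Finite d'] [∀ i, Finite (D i)]

lemma hasGaussianLaw_of_mem_componentwise (hξ : HasGaussianLaw (fun ω i => ξ i ω) μ)
    {X : α → d → ℝ} (hX : X ∈ componentwise d (componentSpan ξ Set.univ)) :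
    HasGaussianLaw X μ := by
  have := Fintype.ofFinite ι
  have := Fintype.ofFinite d
  have (i : ι) := Fintype.ofFinite (D i)
  obtain ⟨L, hL⟩ := exists_continuousLinearMap_of_mem_componentwise hX
  rw [funext hL]
  exact hξ.map_fun L

lemma indepFun_of_crossCov_eq_zero (hξ : HasGaussianLaw (fun ω i => ξ i ω) μ)
    {X : α → d → ℝ} (hX : X ∈ componentwise d (componentSpan ξ Set.univ))
    {Y : α → d' → ℝ} (hY : Y ∈ componentwise d' (componentSpan ξ Set.univ))
    (h : crossCov μ X Y = 0) : IndepFun X Y μ := by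
  have := Fintype.ofFinite ι
  have := Fintype.ofFinite d
  have := Fintype.ofFinite d'
  have (i : ι) := Fintype.ofFinite (D i)
  obtain ⟨L, hL⟩ := exists_continuousLinearMap_of_mem_componentwise hX
  obtain ⟨M, hM⟩ := exists_continuousLinearMap_of_mem_componentwise hY
  have hXY : HasGaussianLaw (fun ω => (X ω, Y ω)) μ := by
    simp only [hL, hM]
    exact hξ.map_fun (L.prod M)
  exact HasGaussianLaw.indepFun_of_covariance_eval (X := fun i ω => X ω i)
    (Y := fun j ω => Y ω j) hXY fun i j => congrFun₂ h i j

lemma indep_iSup_comap_of_crossCov_eq_zero (hξ : HasGaussianLaw (fun ω i => ξ i ω) μ)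
    {X : α → d → ℝ} (hX : X ∈ componentwise d (componentSpan ξ Set.univ)) {s : Finset κ}
    {Y : κ → α → d' → ℝ} (hY : ∀ j ∈ s, Y j ∈ componentwise d' (componentSpan ξ Set.univ))
    (h : ∀ j ∈ s, crossCov μ X (Y j) = 0) :
    Indep (MeasurableSpace.comap X inferInstance)
      (⨆ j ∈ s, MeasurableSpace.comap (Y j) inferInstance) μ := by
  let Ys : α → s × d' → ℝ := fun ω a => Y a.1 ω a.2
  have hYs : Ys ∈ componentwise (s × d') (componentSpan ξ Set.univ) := fun a => hY a.1 a.1.2 a.2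
  have hXYs : crossCov μ X Ys = 0 := by
    ext i a
    exact congrFun₂ (h a.1 a.1.2) i a.2
  refine indep_of_indep_of_le_right (indepFun_of_crossCov_eq_zero hξ hX hYs hXYs) ?_
  refine iSup₂_le fun j hj => ?_
  have hYj : Y j = (fun z b => z (⟨j, hj⟩, b)) ∘ Ys := rfl
  rw [hYj, ← MeasurableSpace.comap_comp]
  exact MeasurableSpace.comap_mono (Measurable.comap_le (by fun_prop))

end Gaussian

section ConditionalExpectation

variable {α E : Type*} {m mα : MeasurableSpace α} {μ : Measure α} [NormedAddCommGroup E]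
  [NormedSpace ℝ E] [CompleteSpace E] [MeasurableSpace E] [BorelSpace E]
  [SecondCountableTopology E]

lemma condExp_ae_eq_of_eq_add_indep [IsProbabilityMeasure μ] {X Z T : α → E} (hm : m ≤ mα)
    (hX : X = Z + T) (hZ : Measurable[m] Z) (hZi : Integrable Z μ) (hT : Measurable T)
    (hTi : Integrable T μ) (hT0 : ∫ ω, T ω ∂μ = 0)
    (hind : Indep (MeasurableSpace.comap T inferInstance) m μ) : μ[X | m] =ᵐ[μ] Z := by
  have hTm : μ[T | m] =ᵐ[μ] fun _ => 0 := by
    have hmean := condExp_indep_eq hT.comap_le hm (comap_measurable T).stronglyMeasurable hind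
    rwa [hT0] at hmean
  rw [hX]
  refine (condExp_add hZi hTi m).trans ?_
  rw [condExp_of_stronglyMeasurable hm hZ.stronglyMeasurable hZi]
  filter_upwards [hTm] with ω hω
  rw [Pi.add_apply, hω, add_zero]

end ConditionalExpectation

section Noise

variable {N : ℕ}

lemma IsGaussianVec.hasGaussianLaw {d : Type} [Fintype d] {μ : Measure Ω} {X : Ω → d → ℝ}
    (h : IsGaussianVec μ X) (hX : Measurable X) : HasGaussianLaw X μ := by
  classical
  refine ⟨isGaussian_of_map_eq_gaussianReal fun L => ?_⟩
  obtain ⟨m, s, hms⟩ := h fun i => L fun j => if i = j then 1 else 0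
  refine ⟨m, s, ?_⟩
  have hL : ∀ x : d → ℝ, L x = ∑ i, (L fun j => if i = j then 1 else 0) * x i := fun x => by
    simpa only [ContinuousLinearMap.coe_coe, smul_eq_mul, mul_comm] using
      LinearMap.pi_apply_eq_sum_univ (L : (d → ℝ) →ₗ[ℝ] ℝ) x
  rw [Measure.map_map (by fun_prop) hX, ← hms]
  exact congrArg (μ.map ·) (funext fun ω => hL (X ω))

/-- Block sizes of the members of the family `x(0), w(0), …, w(N-1), v(0), …, v(N-1)`. -/
def noiseDim (nv pv : Fin 3 → ℕ) : Unit ⊕ Fin N ⊕ Fin N → Fin 3 → ℕ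
  | .inl _ => nv
  | .inr (.inl _) => nv
  | .inr (.inr _) => pv

/-- The primitive random vectors `x(0), w(0), …, w(N-1), v(0), …, v(N-1)` as a single family. -/
def noise {α : Type*} (x0 : α → idx nv → ℝ) (w : ℕ → α → idx nv → ℝ) (v : ℕ → α → idx pv → ℝ) :
    (i : Unit ⊕ Fin N ⊕ Fin N) → α → idx (noiseDim nv pv i) → ℝ
  | .inl _ => x0
  | .inr (.inl k) => w k
  | .inr (.inr k) => v k

/-- The first time `k` at which `x(0), …, x(k)`, `y(0), …, y(k-1)` may depend on the given
primitive random vector. -/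
def noiseTime : Unit ⊕ Fin N ⊕ Fin N → ℕ
  | .inl _ => 0
  | .inr (.inl k) => k + 1
  | .inr (.inr k) => k + 1

/-- The span of the components of `x(0), w(0), …, w(k-1), v(0), …, v(k-1)`. -/
def pastNoise {α : Type*} (N : ℕ) (x0 : α → idx nv → ℝ) (w : ℕ → α → idx nv → ℝ)
    (v : ℕ → α → idx pv → ℝ) (k : ℕ) : Submodule ℝ (α → ℝ) :=
  componentSpan (noise (N := N) x0 w v) {i | noiseTime i ≤ k}

section Deterministic

variable {α : Type*} {x0 : α → idx nv → ℝ} {w : ℕ → α → idx nv → ℝ} {v : ℕ → α → idx pv → ℝ}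
  {k l : ℕ}

lemma pastNoise_mono (h : k ≤ l) : pastNoise N x0 w v k ≤ pastNoise N x0 w v l :=
  componentSpan_mono fun _ hi => le_trans hi h

lemma mem_univ_of_mem_pastNoise {d : Type*} {X : α → d → ℝ}
    (hX : X ∈ componentwise d (pastNoise N x0 w v k)) :
    X ∈ componentwise d (componentSpan (noise (N := N) x0 w v) Set.univ) :=
  componentwise_mono (componentSpan_mono (Set.subset_univ _)) hX

lemma initial_mem_pastNoise : x0 ∈ componentwise (idx nv) (pastNoise N x0 w v k) :=
  mem_componentwise_componentSpan (X := noise x0 w v) (i := .inl ()) (Nat.zero_le k)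

lemma processNoise_mem_pastNoise (hk : k < N) :
    w k ∈ componentwise (idx nv) (pastNoise N x0 w v (k + 1)) :=
  mem_componentwise_componentSpan (X := noise x0 w v) (i := .inr (.inl ⟨k, hk⟩))
    (le_refl (k + 1))

lemma sensorNoise_mem_pastNoise (hk : k < N) :
    v k ∈ componentwise (idx pv) (pastNoise N x0 w v (k + 1)) :=
  mem_componentwise_componentSpan (X := noise x0 w v) (i := .inr (.inr ⟨k, hk⟩))
    (le_refl (k + 1))

end Deterministic

namespace NoiseOK

variable {μ : Measure Ω} {P0 W : Matrix (idx nv) (idx nv) ℝ} {V : Matrix (idx pv) (idx pv) ℝ}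
  {x0 : Ω → idx nv → ℝ} {w : ℕ → Ω → idx nv → ℝ} {v : ℕ → Ω → idx pv → ℝ}

lemma measurable_noise (h : NoiseOK μ N P0 W V x0 w v) (i : Unit ⊕ Fin N ⊕ Fin N) :
    Measurable (noise x0 w v i) := by
  obtain ⟨hx0, hw, hv, -⟩ := h
  rcases i with _ | k | k
  exacts [hx0, hw k, hv k]

lemma iIndepFun_noise (h : NoiseOK μ N P0 W V x0 w v) :
    iIndepFun (noise (N := N) x0 w v) μ := by
  obtain ⟨-, -, -, hindep, -⟩ := h
  refine (iIndepFun_iff_iIndep _ _ μ).2 ?_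
  convert hindep using 2 with i
  rcases i with _ | k | k <;> rfl

lemma hasGaussianLaw_noise (h : NoiseOK μ N P0 W V x0 w v) :
    HasGaussianLaw (fun ω (i : Unit ⊕ Fin N ⊕ Fin N) => noise x0 w v i ω) μ := by
  refine iIndepFun.hasGaussianLaw (fun i => ?_) h.iIndepFun_noise
  have hmeas := h.measurable_noise i
  obtain ⟨-, -, -, -, hx0, hw, hv, -⟩ := h
  rcases i with _ | k | k
  exacts [hx0.hasGaussianLaw hmeas, (hw k k.2).hasGaussianLaw hmeas,
    (hv k k.2).hasGaussianLaw hmeas]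

lemma integral_noise (h : NoiseOK μ N P0 W V x0 w v) (i : Unit ⊕ Fin N ⊕ Fin N)
    (a : idx (noiseDim nv pv i)) : ∫ ω, noise x0 w v i ω a ∂μ = 0 := by
  obtain ⟨-, -, -, -, -, -, -, hx0, -, hw, -, hv, -⟩ := h
  rcases i with _ | k | k
  exacts [hx0 a, hw k k.2 a, hv k k.2 a]

lemma memLp_noise (h : NoiseOK μ N P0 W V x0 w v) (i : Unit ⊕ Fin N ⊕ Fin N) :
    MemLp (noise x0 w v i) 2 μ :=
  h.hasGaussianLaw_noise.memLp_two.eval i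

lemma crossCov_noise_of_ne (h : NoiseOK μ N P0 W V x0 w v) {i j : Unit ⊕ Fin N ⊕ Fin N}
    (hij : i ≠ j) : crossCov μ (noise x0 w v i) (noise x0 w v j) = 0 := by
  ext a b
  exact ((h.iIndepFun_noise.indepFun hij).comp (measurable_pi_apply a)
    (measurable_pi_apply b)).covariance_eq_zero ((h.memLp_noise i).eval a)
    ((h.memLp_noise j).eval b)

variable {k : ℕ}

lemma crossCov_processNoise_sensorNoise (h : NoiseOK μ N P0 W V x0 w v) (hk : k < N) :
    crossCov μ (w k) (v k) = 0 :=
  h.crossCov_noise_of_ne (i := .inr (.inl ⟨k, hk⟩)) (j := .inr (.inr ⟨k, hk⟩)) (by simp)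

variable {d : Type*} {X : Ω → d → ℝ}

lemma measurable (h : NoiseOK μ N P0 W V x0 w v)
    (hX : X ∈ componentwise d (pastNoise N x0 w v k)) : Measurable X :=
  measurable_of_mem_componentwise (fun i _ => h.measurable_noise i) hX

variable [Fintype d]

lemma memLp (h : NoiseOK μ N P0 W V x0 w v) (hX : X ∈ componentwise d (pastNoise N x0 w v k)) :
    MemLp X 2 μ :=
  (hasGaussianLaw_of_mem_componentwise h.hasGaussianLaw_noise
    (mem_univ_of_mem_pastNoise hX)).memLp_two

lemma integral_eq_zero (h : NoiseOK μ N P0 W V x0 w v)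
    (hX : X ∈ componentwise d (pastNoise N x0 w v k)) : ∫ ω, X ω ∂μ = 0 :=
  integral_eq_zero_of_mem_componentwise h.hasGaussianLaw_noise.integrable h.integral_noise
    (mem_univ_of_mem_pastNoise hX)

lemma crossCov_initial [IsProbabilityMeasure μ] (h : NoiseOK μ N P0 W V x0 w v) :
    crossCov μ x0 x0 = P0 := by
  have hL := h.memLp_noise (.inl ())
  obtain ⟨-, -, -, -, -, -, -, hmean, hcov, -⟩ := h
  exact crossCov_eq_of_integral_eq_zero hL hmean hcov

lemma crossCov_processNoise [IsProbabilityMeasure μ] (h : NoiseOK μ N P0 W V x0 w v) (hk : k < N) :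
    crossCov μ (w k) (w k) = W := by
  have hL := h.memLp_noise (.inr (.inl ⟨k, hk⟩))
  obtain ⟨-, -, -, -, -, -, -, -, -, hmean, hcov, -⟩ := h
  exact crossCov_eq_of_integral_eq_zero hL (hmean k hk) (hcov k hk)

lemma crossCov_sensorNoise [IsProbabilityMeasure μ] (h : NoiseOK μ N P0 W V x0 w v) (hk : k < N) :
    crossCov μ (v k) (v k) = V := by
  have hL := h.memLp_noise (.inr (.inr ⟨k, hk⟩))
  obtain ⟨-, -, -, -, -, -, -, -, -, -, -, hmean, hcov⟩ := h
  exact crossCov_eq_of_integral_eq_zero hL (hmean k hk) (hcov k hk)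

variable [IsFiniteMeasure μ]

lemma noise_mem_uncorrelated (h : NoiseOK μ N P0 W V x0 w v) {i : Unit ⊕ Fin N ⊕ Fin N}
    (hi : k < noiseTime i) :
    noise x0 w v i ∈ componentwise _ (uncorrelated μ (pastNoise N x0 w v k)) :=
  mem_componentwise_uncorrelated (h.memLp_noise i) (fun j _ => h.memLp_noise j)
    fun _ hj => h.crossCov_noise_of_ne (ne_of_apply_ne noiseTime (hj.trans_lt hi).ne')

lemma processNoise_mem_uncorrelated (h : NoiseOK μ N P0 W V x0 w v) (hk : k < N) :
    w k ∈ componentwise (idx nv) (uncorrelated μ (pastNoise N x0 w v k)) :=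
  h.noise_mem_uncorrelated (i := .inr (.inl ⟨k, hk⟩)) k.lt_succ_self

lemma sensorNoise_mem_uncorrelated (h : NoiseOK μ N P0 W V x0 w v) (hk : k < N) :
    v k ∈ componentwise (idx pv) (uncorrelated μ (pastNoise N x0 w v k)) :=
  h.noise_mem_uncorrelated (i := .inr (.inr ⟨k, hk⟩)) k.lt_succ_self

end NoiseOK

end Noise

section KalmanStep

variable {μ : Measure Ω} [IsFiniteMeasure μ] {e w : Ω → idx nv → ℝ} {v : Ω → idx pv → ℝ}
  (A : Matrix (idx nv) (idx nv) ℝ) (C : Matrix (idx pv) (idx nv) ℝ)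

lemma crossCov_output_self (he : MemLp e 2 μ) (hv : MemLp v 2 μ) (hev : crossCov μ e v = 0) :
    crossCov μ (fun ω => C *ᵥ e ω + v ω) (fun ω => C *ᵥ e ω + v ω) =
      C * crossCov μ e e * Cᵀ + crossCov μ v v :=
  crossCov_mulVec_add_mulVec_add C C he hv hv hev hev

lemma posDef_crossCov_output_self (he : MemLp e 2 μ) (hv : MemLp v 2 μ)
    (hev : crossCov μ e v = 0) (hV : (crossCov μ v v).PosDef) :
    (crossCov μ (fun ω => C *ᵥ e ω + v ω) (fun ω => C *ᵥ e ω + v ω)).PosDef := by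
  rw [crossCov_output_self C he hv hev, ← conjTranspose_eq_transpose_of_trivial]
  exact .posSemidef_add ((posSemidef_crossCov_self he).mul_mul_conjTranspose_same C) hV

lemma Kgain_eq_crossCov_mul_inv (he : MemLp e 2 μ) (hw : MemLp w 2 μ) (hv : MemLp v 2 μ)
    (hew : crossCov μ e w = 0) (hev : crossCov μ e v = 0) (hwv : crossCov μ w v = 0) :
    Kgain A C (crossCov μ v v) (crossCov μ e e) =
      crossCov μ (fun ω => A *ᵥ e ω + w ω) (fun ω => C *ᵥ e ω + v ω) *
        (crossCov μ (fun ω => C *ᵥ e ω + v ω) (fun ω => C *ᵥ e ω + v ω))⁻¹ := by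
  rw [crossCov_output_self C he hv hev, crossCov_mulVec_add_mulVec_add A C he hw hv hew hev, hwv,
    add_zero, Kgain]

lemma crossCov_kalmanError_output_eq_zero (he : MemLp e 2 μ) (hw : MemLp w 2 μ)
    (hv : MemLp v 2 μ) (hew : crossCov μ e w = 0) (hev : crossCov μ e v = 0)
    (hwv : crossCov μ w v = 0) (hV : (crossCov μ v v).PosDef) :
    crossCov μ (fun ω => A *ᵥ e ω + w ω -
        Kgain A C (crossCov μ v v) (crossCov μ e e) *ᵥ (C *ᵥ e ω + v ω))
      (fun ω => C *ᵥ e ω + v ω) = 0 := by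
  rw [Kgain_eq_crossCov_mul_inv A C he hw hv hew hev hwv]
  exact crossCov_sub_gain_mulVec_eq_zero ((memLp_mulVec A he).add hw) ((memLp_mulVec C he).add hv)
    (posDef_crossCov_output_self C he hv hev hV)

lemma crossCov_kalmanError_self (he : MemLp e 2 μ) (hw : MemLp w 2 μ) (hv : MemLp v 2 μ)
    (hew : crossCov μ e w = 0) (hev : crossCov μ e v = 0) (hwv : crossCov μ w v = 0)
    (hV : (crossCov μ v v).PosDef) :
    crossCov μ
        (fun ω => A *ᵥ e ω + w ω -
          Kgain A C (crossCov μ v v) (crossCov μ e e) *ᵥ (C *ᵥ e ω + v ω))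
        (fun ω => A *ᵥ e ω + w ω -
          Kgain A C (crossCov μ v v) (crossCov μ e e) *ᵥ (C *ᵥ e ω + v ω)) =
      A * crossCov μ e e * Aᵀ + crossCov μ w w -
        Kgain A C (crossCov μ v v) (crossCov μ e e) * (C * crossCov μ e e * Aᵀ) := by
  have hz : MemLp (fun ω => A *ᵥ e ω + w ω) 2 μ := (memLp_mulVec A he).add hw
  have hs : MemLp (fun ω => C *ᵥ e ω + v ω) 2 μ := (memLp_mulVec C he).add hv
  rw [Kgain_eq_crossCov_mul_inv A C he hw hv hew hev hwv,
    crossCov_sub_gain_mulVec_self hz hs (posDef_crossCov_output_self C he hv hev hV),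
    crossCov_mulVec_add_mulVec_add A A he hw hw hew hew,
    crossCov_mulVec_add_mulVec_add C A he hv hw hev hew, crossCov_eq_zero_comm.1 hwv, add_zero]

end KalmanStep

section LoopSignals

variable {α : Type} {A : Matrix (idx nv) (idx nv) ℝ} {B : Matrix (idx nv) (idx qv) ℝ}
  {C : Matrix (idx pv) (idx nv) ℝ} {V : Matrix (idx pv) (idx pv) ℝ}
  {W P0 : Matrix (idx nv) (idx nv) ℝ}
  {x0 : α → idx nv → ℝ} {w : ℕ → α → idx nv → ℝ} {v : ℕ → α → idx pv → ℝ}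
  {F G : ℕ → Matrix (idx qv) (idx pv) ℝ} {Φ : ℕ → ℕ → Matrix (idx qv) (idx pv) ℝ}
  {x : ℕ → α → idx nv → ℝ} {u : ℕ → α → idx qv → ℝ} {y : ℕ → α → idx pv → ℝ} {N k : ℕ}

/-- The part of the control `u(k)` determined by the outputs `y(0), …, y(k-1)`. -/
def delayedInput (G : ℕ → Matrix (idx qv) (idx pv) ℝ) (Φ : ℕ → ℕ → Matrix (idx qv) (idx pv) ℝ)
    (y : ℕ → α → idx pv → ℝ) (k : ℕ) : α → idx qv → ℝ :=
  (if 1 ≤ k then fun ω => G k *ᵥ y (k - 1) ω else 0) +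
    ∑ j ∈ range (k - 1), fun ω => Φ k j *ᵥ y j ω

/-- The Kalman prediction error `x(k) - x̂(k | k-1)`. -/
def predErr (A : Matrix (idx nv) (idx nv) ℝ) (B : Matrix (idx nv) (idx qv) ℝ)
    (C : Matrix (idx pv) (idx nv) ℝ) (V : Matrix (idx pv) (idx pv) ℝ)
    (W P0 : Matrix (idx nv) (idx nv) ℝ) (x : ℕ → α → idx nv → ℝ)
    (u : ℕ → α → idx qv → ℝ) (y : ℕ → α → idx pv → ℝ) (k : ℕ) : α → idx nv → ℝ :=
  x k - xpred A B C V W P0 u y k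

/-- The closed-loop forecast of `x(k+1)` from the outputs `y(0), …, y(k-1)`, the version of its
conditional expectation that is linear in them. -/
def forecast (A : Matrix (idx nv) (idx nv) ℝ) (B : Matrix (idx nv) (idx qv) ℝ)
    (C : Matrix (idx pv) (idx nv) ℝ) (V : Matrix (idx pv) (idx pv) ℝ)
    (W P0 : Matrix (idx nv) (idx nv) ℝ) (F G : ℕ → Matrix (idx qv) (idx pv) ℝ)
    (Φ : ℕ → ℕ → Matrix (idx qv) (idx pv) ℝ)
    (u : ℕ → α → idx qv → ℝ) (y : ℕ → α → idx pv → ℝ) (k : ℕ) : α → idx nv → ℝ :=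
  fun ω => A *ᵥ xpred A B C V W P0 u y k ω +
    B *ᵥ (F k *ᵥ (C *ᵥ xpred A B C V W P0 u y k ω) + delayedInput G Φ y k ω)

/-- The error of the closed-loop forecast of `x(k+1)` from the outputs `y(0), …, y(k-1)`. -/
def forecastErr (A : Matrix (idx nv) (idx nv) ℝ) (B : Matrix (idx nv) (idx qv) ℝ)
    (C : Matrix (idx pv) (idx nv) ℝ) (V : Matrix (idx pv) (idx pv) ℝ)
    (W P0 : Matrix (idx nv) (idx nv) ℝ) (w : ℕ → α → idx nv → ℝ)
    (F : ℕ → Matrix (idx qv) (idx pv) ℝ) (x : ℕ → α → idx nv → ℝ)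
    (u : ℕ → α → idx qv → ℝ) (y : ℕ → α → idx pv → ℝ) (k : ℕ) : α → idx nv → ℝ :=
  fun ω => A *ᵥ predErr A B C V W P0 x u y k ω + w k ω +
    (B * F k) *ᵥ innov A B C V W P0 u y k ω

lemma output_mem_componentSpan {j : ℕ} (h : j < k) :
    y j ∈ componentwise (idx pv) (componentSpan y (Set.Iio k)) :=
  mem_componentwise_componentSpan (X := y) (s := Set.Iio k) h

lemma delayedInput_mem_componentSpan :
    delayedInput G Φ y k ∈ componentwise (idx qv) (componentSpan y (Set.Iio k)) := by
  refine add_mem ?_ (sum_mem fun j hj => mulVec_mem_componentwise _ (output_mem_componentSpan ?_))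
  · split_ifs with hk
    · exact mulVec_mem_componentwise _ (output_mem_componentSpan (by lia))
    · exact zero_mem _
  · have := mem_range.1 hj
    lia

namespace ClosedLoop

lemma input_eq (hcl : ClosedLoop A B C x0 w v F G Φ x u y) :
    u k = (fun ω => F k *ᵥ y k ω) + delayedInput G Φ y k := by
  ext1 ω
  rw [hcl.2.2.2 k ω, add_assoc]
  simp only [delayedInput, Pi.add_apply, Finset.sum_apply, ite_apply, Pi.zero_apply]

lemma input_mem_componentSpan (hcl : ClosedLoop A B C x0 w v F G Φ x u y) :
    u k ∈ componentwise (idx qv) (componentSpan y (Set.Iio (k + 1))) := by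
  rw [hcl.input_eq]
  exact add_mem (mulVec_mem_componentwise _ (output_mem_componentSpan k.lt_succ_self))
    (componentwise_mono (componentSpan_mono (Set.Iio_subset_Iio k.le_succ))
      delayedInput_mem_componentSpan)

lemma xpred_mem_componentSpan (hcl : ClosedLoop A B C x0 w v F G Φ x u y) :
    xpred A B C V W P0 u y k ∈ componentwise (idx nv) (componentSpan y (Set.Iio k)) := by
  induction k with
  | zero => exact zero_mem _
  | succ k ih =>
    have hpred := componentwise_mono (componentSpan_mono (Set.Iio_subset_Iio k.le_succ)) ih
    have hinnov := sub_mem (output_mem_componentSpan k.lt_succ_self)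
      (mulVec_mem_componentwise C hpred)
    exact add_mem (add_mem (mulVec_mem_componentwise A hpred)
      (mulVec_mem_componentwise B hcl.input_mem_componentSpan))
      (mulVec_mem_componentwise _ hinnov)

lemma forecast_mem_componentSpan (hcl : ClosedLoop A B C x0 w v F G Φ x u y) :
    forecast A B C V W P0 F G Φ u y k ∈
      componentwise (idx nv) (componentSpan y (Set.Iio k)) := by
  have hpred := hcl.xpred_mem_componentSpan (V := V) (W := W) (P0 := P0) (k := k)
  have hFC := mulVec_mem_componentwise (F k) (mulVec_mem_componentwise C hpred)
  exact add_mem (mulVec_mem_componentwise A hpred)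
    (mulVec_mem_componentwise B (add_mem hFC delayedInput_mem_componentSpan))

lemma state_mem_and_componentSpan_le_pastNoise (hcl : ClosedLoop A B C x0 w v F G Φ x u y)
    (hk : k ≤ N) :
    x k ∈ componentwise (idx nv) (pastNoise N x0 w v k) ∧
      componentSpan y (Set.Iio k) ≤ pastNoise N x0 w v k := by
  induction k with
  | zero =>
    rw [show x 0 = x0 from funext hcl.1]
    exact ⟨initial_mem_pastNoise, componentSpan_le fun j hj => absurd hj (Nat.not_lt_zero j)⟩
  | succ k ih =>
    obtain ⟨hx, hy⟩ := ih (Nat.le_of_succ_le hk)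
    have hmono := pastNoise_mono (N := N) (x0 := x0) (w := w) (v := v) k.le_succ
    have hx' := componentwise_mono hmono hx
    have hyk : y k ∈ componentwise (idx pv) (pastNoise N x0 w v (k + 1)) := by
      rw [show y k = fun ω => C *ᵥ x k ω + v k ω from funext (hcl.2.2.1 k)]
      exact add_mem (mulVec_mem_componentwise C hx') (sensorNoise_mem_pastNoise hk)
    have hy' : componentSpan y (Set.Iio (k + 1)) ≤ pastNoise N x0 w v (k + 1) := by
      refine componentSpan_le fun j hj => ?_
      rcases Nat.lt_succ_iff_lt_or_eq.1 hj with hj | rfl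
      · exact componentwise_mono (hy.trans hmono) (output_mem_componentSpan hj)
      · exact hyk
    refine ⟨?_, hy'⟩
    rw [show x (k + 1) = fun ω => A *ᵥ x k ω + B *ᵥ u k ω + w k ω from funext (hcl.2.1 k)]
    exact add_mem (add_mem (mulVec_mem_componentwise A hx')
      (mulVec_mem_componentwise B (componentwise_mono hy' hcl.input_mem_componentSpan)))
      (processNoise_mem_pastNoise hk)

lemma predErr_mem_pastNoise (hcl : ClosedLoop A B C x0 w v F G Φ x u y) (hk : k ≤ N) :
    predErr A B C V W P0 x u y k ∈ componentwise (idx nv) (pastNoise N x0 w v k) :=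
  have ⟨hx, hy⟩ := hcl.state_mem_and_componentSpan_le_pastNoise hk
  sub_mem hx (componentwise_mono hy hcl.xpred_mem_componentSpan)

lemma innov_eq (hcl : ClosedLoop A B C x0 w v F G Φ x u y) :
    innov A B C V W P0 u y k = fun ω => C *ᵥ predErr A B C V W P0 x u y k ω + v k ω := by
  ext1 ω
  rw [innov, predErr, hcl.2.2.1 k ω, Pi.sub_apply, mulVec_sub]
  abel

lemma predErr_zero (hcl : ClosedLoop A B C x0 w v F G Φ x u y) :
    predErr A B C V W P0 x u y 0 = x0 := by
  ext1 ω
  simp only [predErr, xpred, Pi.sub_apply, hcl.1, sub_zero]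

lemma predErr_succ (hcl : ClosedLoop A B C x0 w v F G Φ x u y) :
    predErr A B C V W P0 x u y (k + 1) = fun ω => A *ᵥ predErr A B C V W P0 x u y k ω + w k ω -
      Kgain A C V (Pmat A C V W P0 k) *ᵥ innov A B C V W P0 u y k ω := by
  ext1 ω
  simp only [predErr, xpred, innov, Pi.sub_apply, hcl.2.1, mulVec_sub]
  abel

lemma state_succ_eq (hcl : ClosedLoop A B C x0 w v F G Φ x u y) :
    x (k + 1) = forecast A B C V W P0 F G Φ u y k +
      forecastErr A B C V W P0 w F x u y k := by
  ext1 ω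
  simp only [forecast, forecastErr, predErr, innov, Pi.add_apply, Pi.sub_apply,
    hcl.2.1, hcl.input_eq, mulVec_add, mulVec_sub, mulVec_mulVec, Matrix.mul_assoc]
  abel

lemma forecastErr_eq (hcl : ClosedLoop A B C x0 w v F G Φ x u y)
    (L : Matrix (idx nv) (idx pv) ℝ) :
    forecastErr A B C V W P0 w F x u y k = fun ω =>
      (x (k + 1) ω - (A *ᵥ xpred A B C V W P0 u y k ω + B *ᵥ u k ω +
        L *ᵥ innov A B C V W P0 u y k ω)) + (B * F k + L) *ᵥ innov A B C V W P0 u y k ω := by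
  ext1 ω
  simp only [forecastErr, predErr, Pi.sub_apply, hcl.2.1, mulVec_sub, add_mulVec]
  abel

lemma output_mem_pastNoise (hcl : ClosedLoop A B C x0 w v F G Φ x u y) (hk : k < N) :
    y k ∈ componentwise (idx pv) (pastNoise N x0 w v (k + 1)) :=
  componentwise_mono (hcl.state_mem_and_componentSpan_le_pastNoise hk).2
    (output_mem_componentSpan k.lt_succ_self)

lemma innov_mem_pastNoise (hcl : ClosedLoop A B C x0 w v F G Φ x u y) (hk : k < N) :
    innov A B C V W P0 u y k ∈ componentwise (idx pv) (pastNoise N x0 w v (k + 1)) := by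
  rw [hcl.innov_eq]
  exact add_mem (mulVec_mem_componentwise C (componentwise_mono (pastNoise_mono k.le_succ)
    (hcl.predErr_mem_pastNoise hk.le))) (sensorNoise_mem_pastNoise hk)

lemma forecastErr_mem_pastNoise (hcl : ClosedLoop A B C x0 w v F G Φ x u y) (hk : k < N) :
    forecastErr A B C V W P0 w F x u y k ∈
      componentwise (idx nv) (pastNoise N x0 w v (k + 1)) :=
  add_mem (add_mem (mulVec_mem_componentwise A (componentwise_mono (pastNoise_mono k.le_succ)
    (hcl.predErr_mem_pastNoise hk.le))) (processNoise_mem_pastNoise hk))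
    (mulVec_mem_componentwise _ (hcl.innov_mem_pastNoise hk))

lemma measurable_forecast (hcl : ClosedLoop A B C x0 w v F G Φ x u y) :
    Measurable[pastSigma y (k + 1)] (forecast A B C V W P0 F G Φ u y k) := by
  let := pastSigma y (k + 1)
  refine measurable_of_mem_componentwise (fun j hj => Measurable.of_comap_le ?_)
    hcl.forecast_mem_componentSpan
  exact le_iSup₂_of_le (f := fun j (_ : j ∈ range k) => MeasurableSpace.comap (y j) inferInstance)
    j (mem_range.2 hj) le_rfl

end ClosedLoop

end LoopSignals

section Prediction

variable {μ : Measure Ω} {A : Matrix (idx nv) (idx nv) ℝ}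
  {B : Matrix (idx nv) (idx qv) ℝ} {C : Matrix (idx pv) (idx nv) ℝ}
  {V : Matrix (idx pv) (idx pv) ℝ} {W P0 : Matrix (idx nv) (idx nv) ℝ}
  {x0 : Ω → idx nv → ℝ} {w : ℕ → Ω → idx nv → ℝ} {v : ℕ → Ω → idx pv → ℝ}
  {F G : ℕ → Matrix (idx qv) (idx pv) ℝ} {Φ : ℕ → ℕ → Matrix (idx qv) (idx pv) ℝ}
  {x : ℕ → Ω → idx nv → ℝ} {u : ℕ → Ω → idx qv → ℝ} {y : ℕ → Ω → idx pv → ℝ} {N k : ℕ}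

namespace ClosedLoop

lemma measurable_output (hcl : ClosedLoop A B C x0 w v F G Φ x u y)
    (hnoise : NoiseOK μ N P0 W V x0 w v) (hk : k < N) : Measurable (y k) :=
  hnoise.measurable (hcl.output_mem_pastNoise hk)

lemma pastSigma_le (hcl : ClosedLoop A B C x0 w v F G Φ x u y)
    (hnoise : NoiseOK μ N P0 W V x0 w v) (hk : k < N) :
    pastSigma y (k + 1) ≤ ‹MeasurableSpace Ω› :=
  iSup₂_le fun _ hj => (hcl.measurable_output hnoise ((mem_range.1 hj).trans hk)).comap_le

section

variable [IsFiniteMeasure μ]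

lemma uncorrelated_pastNoise_le (hcl : ClosedLoop A B C x0 w v F G Φ x u y) (hk : k ≤ N) :
    uncorrelated μ (pastNoise N x0 w v k) ≤ uncorrelated μ (componentSpan y (Set.Iio k)) :=
  uncorrelated_anti (hcl.state_mem_and_componentSpan_le_pastNoise hk).2

lemma innov_mem_uncorrelated (hcl : ClosedLoop A B C x0 w v F G Φ x u y)
    (hnoise : NoiseOK μ N P0 W V x0 w v) (hk : k < N)
    (he : predErr A B C V W P0 x u y k ∈
      componentwise (idx nv) (uncorrelated μ (componentSpan y (Set.Iio k)))) :
    innov A B C V W P0 u y k ∈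
      componentwise (idx pv) (uncorrelated μ (componentSpan y (Set.Iio k))) := by
  rw [hcl.innov_eq]
  exact add_mem (mulVec_mem_componentwise C he) (componentwise_mono
    (hcl.uncorrelated_pastNoise_le hk.le) (hnoise.sensorNoise_mem_uncorrelated hk))

lemma mulVec_predErr_add_processNoise_mem_uncorrelated
    (hcl : ClosedLoop A B C x0 w v F G Φ x u y)
    (hnoise : NoiseOK μ N P0 W V x0 w v) (hk : k < N)
    (he : predErr A B C V W P0 x u y k ∈
      componentwise (idx nv) (uncorrelated μ (componentSpan y (Set.Iio k)))) :
    (fun ω => A *ᵥ predErr A B C V W P0 x u y k ω + w k ω) ∈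
      componentwise (idx nv) (uncorrelated μ (componentSpan y (Set.Iio k))) :=
  add_mem (mulVec_mem_componentwise A he) (componentwise_mono
    (hcl.uncorrelated_pastNoise_le hk.le) (hnoise.processNoise_mem_uncorrelated hk))

lemma mem_uncorrelated_succ (hcl : ClosedLoop A B C x0 w v F G Φ x u y)
    (hnoise : NoiseOK μ N P0 W V x0 w v) (hk : k < N) {d : Type*} [Fintype d] {X : Ω → d → ℝ}
    (hXL : MemLp X 2 μ)
    (hX : X ∈ componentwise d (uncorrelated μ (componentSpan y (Set.Iio k))))
    (hinnov : crossCov μ X (innov A B C V W P0 u y k) = 0) :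
    X ∈ componentwise d (uncorrelated μ (componentSpan y (Set.Iio (k + 1)))) := by
  have hyL : ∀ j < k + 1, MemLp (y j) 2 μ := fun j hj =>
    hnoise.memLp (hcl.output_mem_pastNoise (hj.trans_le hk))
  refine mem_componentwise_uncorrelated hXL hyL fun j hj => ?_
  rcases Nat.lt_succ_iff_lt_or_eq.1 hj with hj | rfl
  · exact crossCov_eq_zero hX (output_mem_componentSpan hj) (hyL j (hj.trans k.lt_succ_self))
  · have hpred : xpred A B C V W P0 u y j ∈
        componentwise (idx nv) (componentSpan y (Set.Iio j)) := hcl.xpred_mem_componentSpan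
    have hCpred := mulVec_mem_componentwise C hpred
    have hCpredL := hnoise.memLp (componentwise_mono
      (hcl.state_mem_and_componentSpan_le_pastNoise hk.le).2 hCpred)
    have hy : y j = fun ω =>
        innov A B C V W P0 u y j ω + C *ᵥ xpred A B C V W P0 u y j ω := by
      ext1 ω
      rw [innov, sub_add_cancel]
    rw [hy, crossCov_add_right hXL (hnoise.memLp (hcl.innov_mem_pastNoise hk)) hCpredL, hinnov,
      crossCov_eq_zero hX hCpred hCpredL, add_zero]

lemma predErr_succ_mem_uncorrelated (hcl : ClosedLoop A B C x0 w v F G Φ x u y)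
    (hnoise : NoiseOK μ N P0 W V x0 w v) (hk : k < N)
    (he : predErr A B C V W P0 x u y k ∈
      componentwise (idx nv) (uncorrelated μ (componentSpan y (Set.Iio k))))
    (hinnov : crossCov μ (predErr A B C V W P0 x u y (k + 1)) (innov A B C V W P0 u y k) = 0) :
    predErr A B C V W P0 x u y (k + 1) ∈
      componentwise (idx nv) (uncorrelated μ (componentSpan y (Set.Iio (k + 1)))) := by
  refine hcl.mem_uncorrelated_succ hnoise hk (hnoise.memLp (hcl.predErr_mem_pastNoise hk)) ?_ hinnov
  rw [hcl.predErr_succ]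
  exact sub_mem (hcl.mulVec_predErr_add_processNoise_mem_uncorrelated hnoise hk he)
    (mulVec_mem_componentwise _ (hcl.innov_mem_uncorrelated hnoise hk he))

end

variable [IsProbabilityMeasure μ]

lemma crossCov_predErr_succ (hcl : ClosedLoop A B C x0 w v F G Φ x u y)
    (hnoise : NoiseOK μ N P0 W V x0 w v) (hV : V.PosDef) (hk : k < N)
    (hP : crossCov μ (predErr A B C V W P0 x u y k) (predErr A B C V W P0 x u y k) =
      Pmat A C V W P0 k) :
    crossCov μ (predErr A B C V W P0 x u y (k + 1)) (innov A B C V W P0 u y k) = 0 ∧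
      crossCov μ (predErr A B C V W P0 x u y (k + 1)) (predErr A B C V W P0 x u y (k + 1)) =
        Pmat A C V W P0 (k + 1) := by
  have he := hcl.predErr_mem_pastNoise (V := V) (W := W) (P0 := P0) hk.le
  have heL := hnoise.memLp he
  have hwL := hnoise.memLp (processNoise_mem_pastNoise hk)
  have hvL := hnoise.memLp (sensorNoise_mem_pastNoise hk)
  have hew := crossCov_eq_zero_comm.1
    (crossCov_eq_zero (hnoise.processNoise_mem_uncorrelated hk) he heL)
  have hev := crossCov_eq_zero_comm.1
    (crossCov_eq_zero (hnoise.sensorNoise_mem_uncorrelated hk) he heL)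
  have hwv := hnoise.crossCov_processNoise_sensorNoise hk
  have hW := hnoise.crossCov_processNoise hk
  have hVk := hnoise.crossCov_sensorNoise hk
  have hzero := crossCov_kalmanError_output_eq_zero A C heL hwL hvL hew hev hwv (hVk ▸ hV)
  have hself := crossCov_kalmanError_self A C heL hwL hvL hew hev hwv (hVk ▸ hV)
  simp only [hP, hVk, hW] at hzero hself
  rw [hcl.predErr_succ, hcl.innov_eq]
  exact ⟨hzero, hself⟩

theorem crossCov_predErr_self_and_predErr_mem_uncorrelated
    (hcl : ClosedLoop A B C x0 w v F G Φ x u y) (hnoise : NoiseOK μ N P0 W V x0 w v)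
    (hV : V.PosDef) (hk : k ≤ N) :
    crossCov μ (predErr A B C V W P0 x u y k) (predErr A B C V W P0 x u y k) =
        Pmat A C V W P0 k ∧
      predErr A B C V W P0 x u y k ∈
        componentwise (idx nv) (uncorrelated μ (componentSpan y (Set.Iio k))) := by
  induction k with
  | zero =>
    rw [hcl.predErr_zero]
    exact ⟨hnoise.crossCov_initial, mem_componentwise_uncorrelated
      (hnoise.memLp (k := 0) initial_mem_pastNoise) (fun j hj => absurd hj (Nat.not_lt_zero j))
      fun j hj => absurd hj (Nat.not_lt_zero j)⟩
  | succ k ih =>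
    obtain ⟨hP, he⟩ := ih (Nat.le_of_succ_le hk)
    obtain ⟨hinnov, hP'⟩ := hcl.crossCov_predErr_succ hnoise hV hk hP
    exact ⟨hP', hcl.predErr_succ_mem_uncorrelated hnoise hk he hinnov⟩

lemma forecastErr_mem_uncorrelated (hcl : ClosedLoop A B C x0 w v F G Φ x u y)
    (hnoise : NoiseOK μ N P0 W V x0 w v) (hV : V.PosDef) (hk : k < N) :
    forecastErr A B C V W P0 w F x u y k ∈
      componentwise (idx nv) (uncorrelated μ (componentSpan y (Set.Iio k))) := by
  obtain ⟨-, he⟩ := hcl.crossCov_predErr_self_and_predErr_mem_uncorrelated hnoise hV hk.le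
  exact add_mem (hcl.mulVec_predErr_add_processNoise_mem_uncorrelated hnoise hk he)
    (mulVec_mem_componentwise _ (hcl.innov_mem_uncorrelated hnoise hk he))

lemma indep_forecastErr_pastSigma (hcl : ClosedLoop A B C x0 w v F G Φ x u y)
    (hnoise : NoiseOK μ N P0 W V x0 w v) (hV : V.PosDef) (hk : k < N) :
    Indep (MeasurableSpace.comap (forecastErr A B C V W P0 w F x u y k) inferInstance)
      (pastSigma y (k + 1)) μ := by
  have hy : ∀ j ∈ range k, y j ∈ componentwise (idx pv) (pastNoise N x0 w v (j + 1)) :=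
    fun j hj => hcl.output_mem_pastNoise ((mem_range.1 hj).trans hk)
  exact indep_iSup_comap_of_crossCov_eq_zero hnoise.hasGaussianLaw_noise
    (mem_univ_of_mem_pastNoise (hcl.forecastErr_mem_pastNoise hk))
    (fun j hj => mem_univ_of_mem_pastNoise (hy j hj)) fun j hj =>
      crossCov_eq_zero (hcl.forecastErr_mem_uncorrelated hnoise hV hk)
        (output_mem_componentSpan (mem_range.1 hj)) (hnoise.memLp (hy j hj))

theorem condExp_state_succ_ae_eq_forecast (hcl : ClosedLoop A B C x0 w v F G Φ x u y)
    (hnoise : NoiseOK μ N P0 W V x0 w v) (hV : V.PosDef) (hk : k < N) :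
    μ[x (k + 1) | pastSigma y (k + 1)] =ᵐ[μ] forecast A B C V W P0 F G Φ u y k := by
  have hZ := componentwise_mono (hcl.state_mem_and_componentSpan_le_pastNoise hk.le).2
    (hcl.forecast_mem_componentSpan (V := V) (W := W) (P0 := P0))
  have hT := hcl.forecastErr_mem_pastNoise (V := V) (W := W) (P0 := P0) hk
  exact condExp_ae_eq_of_eq_add_indep (hcl.pastSigma_le hnoise hk) hcl.state_succ_eq
    hcl.measurable_forecast ((hnoise.memLp hZ).integrable one_le_two) (hnoise.measurable hT)
    ((hnoise.memLp hT).integrable one_le_two) (hnoise.integral_eq_zero hT)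
    (hcl.indep_forecastErr_pastSigma hnoise hV hk)

lemma state_succ_sub_condExp_ae_eq_forecastErr (hcl : ClosedLoop A B C x0 w v F G Φ x u y)
    (hnoise : NoiseOK μ N P0 W V x0 w v) (hV : V.PosDef) (hk : k < N) :
    (fun ω => x (k + 1) ω - (μ[x (k + 1) | pastSigma y (k + 1)]) ω) =ᵐ[μ]
      forecastErr A B C V W P0 w F x u y k := by
  filter_upwards [hcl.condExp_state_succ_ae_eq_forecast hnoise hV hk] with ω hω
  rw [hω, hcl.state_succ_eq (V := V) (W := W) (P0 := P0), Pi.add_apply, add_sub_cancel_left]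

theorem indepFun_condExp_state_succ (hcl : ClosedLoop A B C x0 w v F G Φ x u y)
    (hnoise : NoiseOK μ N P0 W V x0 w v) (hV : V.PosDef) (hk : k < N) :
    IndepFun (μ[x (k + 1) | pastSigma y (k + 1)])
      (fun ω => x (k + 1) ω - (μ[x (k + 1) | pastSigma y (k + 1)]) ω) μ := by
  have hind : IndepFun (forecast A B C V W P0 F G Φ u y k)
      (forecastErr A B C V W P0 w F x u y k) μ :=
    indep_of_indep_of_le_left (hcl.indep_forecastErr_pastSigma hnoise hV hk).symm
      hcl.measurable_forecast.comap_le
  exact hind.congr (hcl.condExp_state_succ_ae_eq_forecast hnoise hV hk).symm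
    (hcl.state_succ_sub_condExp_ae_eq_forecastErr hnoise hV hk).symm

end ClosedLoop

end Prediction

theorem stmt4_general (μ : Measure Ω) [IsProbabilityMeasure μ] (N : ℕ)
    (A : Matrix (idx nv) (idx nv) ℝ) (B : Matrix (idx nv) (idx qv) ℝ)
    (C : Matrix (idx pv) (idx nv) ℝ)
    (P0 W : Matrix (idx nv) (idx nv) ℝ) (V : Matrix (idx pv) (idx pv) ℝ) (hV : V.PosDef)
    (x0 : Ω → idx nv → ℝ) (w : ℕ → Ω → idx nv → ℝ) (v : ℕ → Ω → idx pv → ℝ)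
    (hnoise : NoiseOK μ N P0 W V x0 w v)
    (F G : ℕ → Matrix (idx qv) (idx pv) ℝ) (Φ : ℕ → ℕ → Matrix (idx qv) (idx pv) ℝ)
    (x : ℕ → Ω → idx nv → ℝ) (u : ℕ → Ω → idx qv → ℝ) (y : ℕ → Ω → idx pv → ℝ)
    (hcl : ClosedLoop A B C x0 w v F G Φ x u y) (k : ℕ) (hk : k ≤ N) :
    (1 ≤ k → ∀ L : Matrix (idx nv) (idx pv) ℝ,
      (fun ω => x k ω - (μ[x k | pastSigma y k]) ω) =ᵐ[μ]
        (fun ω => (x k ω - (A *ᵥ xpred A B C V W P0 u y (k - 1) ω + B *ᵥ u (k - 1) ω +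
            L *ᵥ innov A B C V W P0 u y (k - 1) ω)) +
          (B * F (k - 1) + L) *ᵥ innov A B C V W P0 u y (k - 1) ω)) ∧
    IndepFun (μ[x k | pastSigma y k]) (fun ω => x k ω - (μ[x k | pastSigma y k]) ω) μ := by
  rcases k with _ | k
  · have hbot : pastSigma y 0 = ⊥ := by simp [pastSigma]
    rw [hbot, condExp_bot]
    exact ⟨nofun, indepFun_const_left _ _⟩
  · refine ⟨fun _ L => ?_, hcl.indepFun_condExp_state_succ hnoise hV hk⟩
    rw [Nat.add_sub_cancel, ← hcl.forecastErr_eq]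
    exact hcl.state_succ_sub_condExp_ae_eq_forecastErr hnoise hV hk

/-- with `x̂(k) = E[x(k) | σ(y(0),…,y(k−2))]` and `x̃(k) = x(k) − x̂(k)`,
for every `k ≥ 1` one has almost surely
`x̃(k) = e¹(k) + (B F(k−1) + K¹(k−1)) ỹ(k−1)` with `e¹(k) = x(k) − x̂¹(k)`,
and the random vectors `x̂(k)` and `x̃(k)` are independent. -/
theorem stmt4 {nv qv pv : Fin 3 → ℕ} {Ω : Type} [MeasurableSpace Ω]
    (μ : Measure Ω) [IsProbabilityMeasure μ] (N : ℕ)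
    (A : Matrix (idx nv) (idx nv) ℝ) (B : Matrix (idx nv) (idx qv) ℝ)
    (C : Matrix (idx pv) (idx nv) ℝ)
    (hA : CyclicSparse A) (hB : BlockDiag B) (hC : BlockDiag C)
    (P0 W : Matrix (idx nv) (idx nv) ℝ) (V : Matrix (idx pv) (idx pv) ℝ)
    (hV : V.PosDef)
    (x0 : Ω → idx nv → ℝ) (w : ℕ → Ω → idx nv → ℝ) (v : ℕ → Ω → idx pv → ℝ)
    (hnoise : NoiseOK μ N P0 W V x0 w v)
    (F G : ℕ → Matrix (idx qv) (idx pv) ℝ) (Φ : ℕ → ℕ → Matrix (idx qv) (idx pv) ℝ)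
    (hadm : Admissible F G)
    (x : ℕ → Ω → idx nv → ℝ) (u : ℕ → Ω → idx qv → ℝ) (y : ℕ → Ω → idx pv → ℝ)
    (hcl : ClosedLoop A B C x0 w v F G Φ x u y) :
    ∀ k ≤ N,
      (1 ≤ k →
        (fun ω => x k ω - (μ[x k | pastSigma y k]) ω) =ᵐ[μ]
          (fun ω => (x k ω - xh1 A B C V W P0 u y k ω) +
            (B * F (k - 1) + K1mat A C V (Pmat A C V W P0 (k - 1))) *ᵥ
              innov A B C V W P0 u y (k - 1) ω)) ∧
      IndepFun (μ[x k | pastSigma y k]) (fun ω => x k ω - (μ[x k | pastSigma y k]) ω) μ :=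
  fun k hk => (stmt4_general μ N A B C P0 W V hV x0 w v hnoise F G Φ x u y hcl k hk).imp_left
    fun h hk1 => h hk1 _

end
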